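/- Let c ∈ ℂ, R > 0, and let f : ℂ → ℂ be analytic on an open set containing the closed disk of center c and radius R. Let z1, z2 be distinct points of the open disk of center c and radius R, and let z be any point of the open disk. Then for every N ≥ 1, f(z) − Σ_{n=0}^{N−1} [a_n(z1,z2)(z−z1) + a_n(z2,z1)(z−z2)]·((z−z1)(z−z2))^n = (1/(2πi)) · ∮_{|w−c|=R} f(w)·(z−z1)^N (z−z2)^N / ((w−z1)^N (w−z2)^N (w−z)) dw, where the integral is the circle integral over the circle of center c and radius R traversed counterclockwise. -/

import Mathlib

/-- The two-point Taylor coefficient `a_n(z1, z2)` of `f` at the points `z1, z2`. -/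
noncomputable def twoPointCoeff (f : ℂ → ℂ) (z1 z2 : ℂ) (n : ℕ) : ℂ :=
  if n = 0 then f z2 / (z2 - z1)
  else ∑ k ∈ Finset.range (n + 1),
    ((Nat.factorial (n + k - 1) : ℂ) / ((Nat.factorial k : ℂ) * (Nat.factorial (n - k) : ℂ))) *
      (((-1 : ℂ) ^ (n + 1) * (n : ℂ) * iteratedDeriv (n - k) f z2
          + (-1 : ℂ) ^ k * (k : ℂ) * iteratedDeriv (n - k) f z1)
        / ((Nat.factorial n : ℂ) * (z1 - z2) ^ (n + k + 1)))

/-- half of the partial fraction expansion -/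
noncomputable def tpS (e : ℂ) (Y : ℕ → ℂ) (a b : ℕ) : ℂ :=
  ∑ k ∈ Finset.range b, (Nat.multichoose a k : ℂ) * (-1) ^ k * (e ^ (a + k))⁻¹ * Y (b - k)

theorem tpS_zero_left (e : ℂ) (Y : ℕ → ℂ) (b : ℕ) : tpS e Y 0 (b + 1) = Y (b + 1) := by
  unfold tpS
  rw [Finset.sum_range_succ']
  simp

theorem tpS_succ (e : ℂ) (Y : ℕ → ℂ) (a b : ℕ) :
    tpS e Y (a + 1) (b + 1) = e⁻¹ * (tpS e Y a (b + 1) - tpS e Y (a + 1) b) := by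
  unfold tpS
  rw [Finset.sum_range_succ', Finset.sum_range_succ' _ b, mul_sub, mul_add, Finset.mul_sum,
    Finset.mul_sum, add_sub_right_comm, ← Finset.sum_sub_distrib]
  congr 1
  · refine Finset.sum_congr rfl fun k _ => ?_
    rw [Nat.multichoose_succ_succ, Nat.add_sub_add_right]
    push_cast
    simp only [pow_add, pow_one, mul_inv]
    ring
  · simp only [pow_add, pow_one, mul_inv, Nat.multichoose_zero_right]
    ring

theorem tp_partial (d : ℂ) (X Y : ℕ → ℂ) (I : ℕ → ℕ → ℂ) (h00 : I 0 0 = 0)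
    (hX : ∀ a, I (a + 1) 0 = X (a + 1)) (hY : ∀ b, I 0 (b + 1) = Y (b + 1))
    (hI : ∀ a b, I (a + 1) (b + 1) = d⁻¹ * (I (a + 1) b - I a (b + 1))) (a b : ℕ) :
    I a b = tpS (-d) Y a b + tpS d X b a := by
  induction a generalizing b with
  | zero =>
    cases b with
    | zero => simp [h00, tpS]
    | succ b => rw [hY, tpS_zero_left]; simp [tpS]
  | succ a iha =>
    induction b with
    | zero => rw [hX, tpS_zero_left]; simp [tpS]
    | succ b ihb =>
      rw [hI, iha, ihb, tpS_succ (-d), tpS_succ d, inv_neg]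
      ring

theorem tp_mc (n k : ℕ) : (Nat.multichoose (n + 1) k : ℂ)
    = (Nat.factorial (n + k) : ℂ) / ((Nat.factorial k : ℂ) * (Nat.factorial n : ℂ)) := by
  rw [Nat.multichoose_eq, show n + 1 + k - 1 = k + n by omega, eq_div_iff, add_comm n k,
    ← Nat.add_choose_mul_factorial_mul_factorial k n]
  · first
      | (push_cast; ring; done)
      | (rw [Nat.choose_symm_add]; push_cast; ring)
  · exact mul_ne_zero (by exact_mod_cast k.factorial_ne_zero) (by exact_mod_cast n.factorial_ne_zero)

theorem tp_coeff_eq (f : ℂ → ℂ) (z1 z2 : ℂ) (n : ℕ) (X Y : ℕ → ℂ)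
    (hX : ∀ a, X (a + 1) = iteratedDeriv a f z1 / (Nat.factorial a : ℂ))
    (hY : ∀ a, Y (a + 1) = iteratedDeriv a f z2 / (Nat.factorial a : ℂ)) :
    twoPointCoeff f z1 z2 n = (z2 - z1)⁻¹ *
      (tpS (-(z1 - z2)) Y n (n + 1) + tpS (z1 - z2) X (n + 1) n) := by
  have hfac : ∀ m : ℕ, (Nat.factorial m : ℂ) ≠ 0 := fun m => by exact_mod_cast m.factorial_ne_zero
  cases n with
  | zero =>
    rw [tpS_zero_left, hY]
    simp [twoPointCoeff, tpS, div_eq_inv_mul]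
  | succ n =>
    have hd : z2 - z1 = -(z1 - z2) := by ring
    rw [hd]
    by_cases hd0 : z1 - z2 = 0
    · simp [twoPointCoeff, hd0]
    rw [twoPointCoeff, if_neg (Nat.succ_ne_zero n)]
    generalize z1 - z2 = d at hd0
    simp only [mul_add, add_div, Finset.sum_add_distrib]
    congr 1
    · rw [tpS, Finset.mul_sum]
      refine Finset.sum_congr rfl fun k hk => ?_
      have hk' : k ≤ n + 1 := Nat.lt_succ_iff.1 (Finset.mem_range.1 hk)
      rw [Nat.sub_add_comm hk', hY, tp_mc, show n + 1 + k - 1 = n + k by omega,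
        Nat.factorial_succ n]
      have h1 := hfac k
      have h2 := hfac n
      have h3 := hfac (n + 1 - k)
      have h4 : ((n : ℂ) + 1) ≠ 0 := by exact_mod_cast Nat.succ_ne_zero n
      have h5 : (-d) ^ (n + 1 + k) = (-1) ^ (n + 1) * (-1) ^ k * d ^ (n + 1 + k) := by
        rw [neg_pow, pow_add (-1 : ℂ)]
      have s1 : ((-1 : ℂ) ^ k) * (-1) ^ k = 1 := by rw [← mul_pow]; simp
      have s2 : ((-1 : ℂ) ^ n) * (-1) ^ n = 1 := by rw [← mul_pow]; simp
      have s3 : ((-1 : ℂ) ^ k) ≠ 0 := by simp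
      have s4 : ((-1 : ℂ) ^ n) ≠ 0 := by simp
      rw [h5]
      push_cast
      field_simp
      simp only [pow_succ, pow_add]
      linear_combination (-((n + k).factorial * iteratedDeriv (n + 1 - k) f z2
        * d ^ 2 * d ^ n * d ^ k)) * s2
    · rw [tpS, Finset.mul_sum, Finset.sum_range_succ']
      simp only [Nat.cast_zero, mul_zero, zero_mul, zero_div, add_zero]
      refine Finset.sum_congr rfl fun k hk => ?_
      have hk' : k ≤ n := Nat.lt_succ_iff.1 (Finset.mem_range.1 hk)
      rw [Nat.sub_add_comm hk', hX, tp_mc, show n + 1 + (k + 1) - 1 = n + 1 + k by omega,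
        Nat.add_sub_add_right, Nat.factorial_succ k]
      have h1 := hfac k
      have h2 := hfac (n + 1)
      have h3 := hfac (n - k)
      have h4 : ((k : ℂ) + 1) ≠ 0 := by exact_mod_cast Nat.succ_ne_zero k
      push_cast
      field_simp
      ring

theorem tp_cauchy_pow (c : ℂ) (R : ℝ) (hR : 0 < R) (U : Set ℂ) (hU : IsOpen U)
    (hUB : Metric.closedBall c R ⊆ U) (ζ : ℂ) (hζ : ζ ∈ Metric.ball c R) (a : ℕ) :
    ∀ (f : ℂ → ℂ) (p : FormalMultilinearSeries ℂ ℂ ℂ), DifferentiableOn ℂ f U →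
      HasFPowerSeriesAt f p ζ →
      (∮ w in C(c, R), f w / (w - ζ) ^ (a + 1)) = 2 * Real.pi * Complex.I * p.coeff a := by
  have hne : ∀ w ∈ Metric.sphere c R, w - ζ ≠ 0 := fun w hw =>
    sub_ne_zero.2 (Metric.sphere_disjoint_ball.ne_of_mem hw hζ)
  induction a with
  | zero =>
    intro f p hf hp
    have h := (hf.mono hUB).circleIntegral_sub_inv_smul hζ
    have h0 : p.coeff 0 = f ζ := hp.coeff_zero 1
    rw [h0, ← smul_eq_mul, ← h]
    simp [div_eq_inv_mul]
  | succ a ih =>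
    intro f p hf hp
    have hg : DifferentiableOn ℂ (dslope f ζ) U :=
      (Complex.differentiableOn_dslope (hU.mem_nhds (hUB (Metric.ball_subset_closedBall hζ)))).2 hf
    have h := ih _ _ hg hp.has_fpower_series_dslope_fslope
    rw [FormalMultilinearSeries.coeff_fslope] at h
    rw [← h]
    have hz : (∮ w in C(c, R), f ζ * (w - ζ) ^ (-((a : ℤ) + 2))) = 0 := by
      rw [circleIntegral.integral_const_mul, circleIntegral.integral_sub_zpow_of_ne (by omega),
        mul_zero]
    have hc : ContinuousOn (fun w => dslope f ζ w / (w - ζ) ^ (a + 1)) (Metric.sphere c R) :=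
      ContinuousOn.div (hg.continuousOn.mono (Metric.sphere_subset_closedBall.trans hUB))
        (by fun_prop) (fun w hw => pow_ne_zero _ (hne w hw))
    have hc2 : ContinuousOn (fun w => f ζ * (w - ζ) ^ (-((a : ℤ) + 2))) (Metric.sphere c R) :=
      continuousOn_const.mul (ContinuousOn.zpow₀ (by fun_prop) _ (fun w hw => Or.inl (hne w hw)))
    rw [← add_zero (∮ w in C(c, R), dslope f ζ w / _), ← hz,
      ← circleIntegral.integral_add (hc.circleIntegrable hR.le) (hc2.circleIntegrable hR.le)]
    refine circleIntegral.integral_congr hR.le fun w hw => ?_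
    have hw0 := hne w hw
    have hs := sub_smul_dslope f ζ w
    rw [smul_eq_mul] at hs
    have hfw : f w = (w - ζ) * dslope f ζ w + f ζ := by rw [hs]; ring
    have hzp : (w - ζ) ^ (-((a : ℤ) + 2)) = ((w - ζ) ^ (a + 2))⁻¹ := by
      rw [zpow_neg]; norm_cast
    simp only [hzp, hfw]
    field_simp
    ring

theorem twoPointTaylor_remainder_eq_circleIntegral
    (c : ℂ) (R : ℝ) (hR : 0 < R) (f : ℂ → ℂ)
    (U : Set ℂ) (hU : IsOpen U) (hUB : Metric.closedBall c R ⊆ U)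
    (hf : DifferentiableOn ℂ f U)
    (z1 z2 : ℂ) (hz1 : z1 ∈ Metric.ball c R) (hz2 : z2 ∈ Metric.ball c R)
    (h12 : z1 ≠ z2) (z : ℂ) (hz : z ∈ Metric.ball c R)
    (N : ℕ) (hN : 1 ≤ N) :
    f z - ∑ n ∈ Finset.range N,
        (twoPointCoeff f z1 z2 n * (z - z1) + twoPointCoeff f z2 z1 n * (z - z2)) *
          ((z - z1) * (z - z2)) ^ n
      = (1 / (2 * Real.pi * Complex.I)) *
          ∮ w in C(c, R), f w * (z - z1) ^ N * (z - z2) ^ N /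
            ((w - z1) ^ N * (w - z2) ^ N * (w - z)) := by
  clear hN
  have hpi : (2 * Real.pi * Complex.I : ℂ) ≠ 0 := Complex.two_pi_I_ne_zero
  have hne : ∀ ζ ∈ Metric.ball c R, ∀ w ∈ Metric.sphere c R, w - ζ ≠ 0 := fun ζ hζ w hw =>
    sub_ne_zero.2 (Metric.sphere_disjoint_ball.ne_of_mem hw hζ)
  have hfc : ContinuousOn f (Metric.sphere c R) :=
    hf.continuousOn.mono (Metric.sphere_subset_closedBall.trans hUB)
  have hint : ∀ ζ1 ∈ Metric.ball c R, ∀ ζ2 ∈ Metric.ball c R, ∀ a b : ℕ,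
      CircleIntegrable (fun w => f w / ((w - ζ1) ^ a * (w - ζ2) ^ b)) c R := by
    intro ζ1 h1 ζ2 h2 a b
    refine ContinuousOn.circleIntegrable hR.le (hfc.div (by fun_prop) fun w hw => ?_)
    exact mul_ne_zero (pow_ne_zero _ (hne _ h1 w hw)) (pow_ne_zero _ (hne _ h2 w hw))
  -- Cauchy for derivatives
  have hcd : ∀ ζ ∈ Metric.ball c R, ∀ a : ℕ,
      (∮ w in C(c, R), f w / (w - ζ) ^ (a + 1))
        = 2 * Real.pi * Complex.I * (iteratedDeriv a f ζ / (Nat.factorial a : ℂ)) := by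
    intro ζ hζ a
    have hA : AnalyticAt ℂ f ζ :=
      hf.analyticAt (hU.mem_nhds (hUB (Metric.ball_subset_closedBall hζ)))
    rw [tp_cauchy_pow c R hR U hU hUB ζ hζ a f _ hf hA.hasFPowerSeriesAt,
      FormalMultilinearSeries.coeff_ofScalars]
  have key : ∀ ζ1 ∈ Metric.ball c R, ∀ ζ2 ∈ Metric.ball c R, ζ1 ≠ ζ2 → ∀ n : ℕ,
      twoPointCoeff f ζ1 ζ2 n = (ζ2 - ζ1)⁻¹ * ((1 / (2 * Real.pi * Complex.I)) *
        ∮ w in C(c, R), f w / ((w - ζ1) ^ n * (w - ζ2) ^ (n + 1))) := by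
    intro ζ1 h1 ζ2 h2 hn n
    have hd : ζ1 - ζ2 ≠ 0 := sub_ne_zero.2 hn
    have hp := tp_partial (ζ1 - ζ2) (fun a => iteratedDeriv (a - 1) f ζ1 / (Nat.factorial (a - 1) : ℂ))
      (fun a => iteratedDeriv (a - 1) f ζ2 / (Nat.factorial (a - 1) : ℂ))
      (fun a b => (1 / (2 * Real.pi * Complex.I)) *
        ∮ w in C(c, R), f w / ((w - ζ1) ^ a * (w - ζ2) ^ b)) ?_ ?_ ?_ ?_ n (n + 1)
    · rw [hp]
      exact tp_coeff_eq f ζ1 ζ2 n _ _ (fun a => by simp) (fun a => by simp)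
    · have h0 := ((hf.mono hUB).mono Metric.closure_ball_subset_closedBall).diffContOnCl.circleIntegral_eq_zero hR.le
      simp [h0]
    · intro a
      simp only [pow_zero, mul_one, hcd ζ1 h1, Nat.add_sub_cancel]
      field_simp
    · intro a
      simp only [pow_zero, one_mul, hcd ζ2 h2, Nat.add_sub_cancel]
      field_simp
    · intro a b
      rw [← mul_sub, ← circleIntegral.integral_sub (hint _ h1 _ h2 _ _) (hint _ h1 _ h2 _ _),
        mul_left_comm, ← circleIntegral.integral_const_mul (ζ1 - ζ2)⁻¹]
      refine congrArg (fun t => (1 / (2 * Real.pi * Complex.I)) * t) ?_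
      refine circleIntegral.integral_congr hR.le fun w hw => ?_
      have e1 := hne _ h1 w hw
      have e2 := hne _ h2 w hw
      field_simp
      ring
  induction N with
  | zero =>
    have h := hcd z hz 0
    simp only [zero_add, pow_one, iteratedDeriv_zero, Nat.factorial_zero, Nat.cast_one,
      div_one] at h
    simp only [Finset.range_zero, Finset.sum_empty, pow_zero, mul_one, one_mul, h]
    field_simp
    ring
  | succ N ih =>
    rw [Finset.sum_range_succ, ← sub_sub, ih, key z1 hz1 z2 hz2 h12, key z2 hz2 z1 hz1 h12.symm]
    have hintN : ∀ M : ℕ, CircleIntegrable (fun w => f w * (z - z1) ^ M * (z - z2) ^ M /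
            ((w - z1) ^ M * (w - z2) ^ M * (w - z))) c R := by
      intro M
      refine ContinuousOn.circleIntegrable hR.le (ContinuousOn.div (by fun_prop) (by fun_prop)
        fun w hw => ?_)
      exact mul_ne_zero (mul_ne_zero (pow_ne_zero _ (hne _ hz1 w hw))
        (pow_ne_zero _ (hne _ hz2 w hw))) (hne _ hz w hw)
    have hd : z2 - z1 ≠ 0 := sub_ne_zero.2 h12.symm
    have hstep : (∮ w in C(c, R), f w * (z - z1) ^ N * (z - z2) ^ N /
            ((w - z1) ^ N * (w - z2) ^ N * (w - z)))
        - (∮ w in C(c, R), f w * (z - z1) ^ (N + 1) * (z - z2) ^ (N + 1) /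
            ((w - z1) ^ (N + 1) * (w - z2) ^ (N + 1) * (w - z)))
        = ((z2 - z1)⁻¹ * ((z - z1) * (z - z2)) ^ N * (z - z1)) *
            (∮ w in C(c, R), f w / ((w - z1) ^ N * (w - z2) ^ (N + 1)))
          - ((z2 - z1)⁻¹ * ((z - z1) * (z - z2)) ^ N * (z - z2)) *
            (∮ w in C(c, R), f w / ((w - z2) ^ N * (w - z1) ^ (N + 1))) := by
      rw [← circleIntegral.integral_sub (hintN _) (hintN _),
        ← circleIntegral.integral_const_mul, ← circleIntegral.integral_const_mul,
        ← circleIntegral.integral_sub]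
      · refine circleIntegral.integral_congr hR.le fun w hw => ?_
        have e1 := hne _ hz1 w hw
        have e2 := hne _ hz2 w hw
        have e3 := hne _ hz w hw
        simp only [mul_pow]
        field_simp
        ring
      · simpa only [smul_eq_mul] using! (hint _ hz1 _ hz2 N (N + 1)).const_smul
      · simpa only [smul_eq_mul] using! (hint _ hz2 _ hz1 N (N + 1)).const_smul
    have hd' : (z1 - z2)⁻¹ = -(z2 - z1)⁻¹ := by rw [← inv_neg, neg_sub]
    rw [hd']
    linear_combination (1 / (2 * Real.pi * Complex.I)) * hstep
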